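/- Let K be a finite field with Q elements, let n and r be positive integers, and for each 1 ≤ i ≤ r let f_i be a homogeneous polynomial of degree d_i ≥ 1 in the n+1 variables T_0, …, T_n with coefficients in K. If d_1 + ⋯ + d_r ≤ n, then the number of points of the projective space P^n(K) (the projectivization of the K-vector space K^{n+1}) at which all of the polynomials f_1, …, f_r vanish is congruent to 1 modulo Q. -/

import Mathlib

open Finset

/-- rotated digit expansion -/
def axRot (p a : ℕ) : ℕ → List ℕ → ℕ
  | _, [] => 0
  | l, e :: t => e * p ^ (l % a) + axRot p a (l + 1) t

lemma axRot_modEq (p a : ℕ) (hp : 1 ≤ p) (L : List ℕ) : ∀ l,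
    axRot p a l L ≡ p ^ l * Nat.ofDigits p L [MOD (p ^ a - 1)] := by
  have h1 : p ^ a ≡ 1 [MOD (p ^ a - 1)] := by
    have : 1 ≤ p ^ a := Nat.one_le_pow _ _ hp
    exact ((Nat.modEq_iff_dvd' this).2 dvd_rfl).symm
  have h2 : ∀ l, p ^ (l % a) ≡ p ^ l [MOD (p ^ a - 1)] := by
    intro l
    conv_rhs => rw [← Nat.mod_add_div l a, pow_add, pow_mul]
    simpa using ((h1.pow (l / a)).mul_left (p ^ (l % a))).symm
  induction L with
  | nil => intro l; simp [axRot]; rfl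
  | cons e t ih =>
    intro l
    rw [axRot, Nat.ofDigits_cons]
    have := ((h2 l).mul_left e).add (ih (l + 1))
    refine this.trans ?_
    rw [show p ^ l * (e + p * Nat.ofDigits p t) = e * p ^ l + p ^ (l+1) * Nat.ofDigits p t by ring]

lemma axRot_pos (p a : ℕ) (hp : 1 ≤ p) (L : List ℕ) : ∀ l,
    0 < Nat.ofDigits p L → 0 < axRot p a l L := by
  induction L with
  | nil => intro l; simp [axRot]
  | cons e t ih =>
    intro l
    rw [axRot, Nat.ofDigits_cons]
    intro h
    have hpp : 0 < p ^ (l % a) := Nat.one_le_pow _ _ hp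
    rcases Nat.eq_zero_or_pos e with he | he
    · subst he
      have : 0 < Nat.ofDigits p t := by
        rcases Nat.eq_zero_or_pos (Nat.ofDigits p t) with h0 | h0
        · simp [h0] at h
        · exact h0
      have := ih (l + 1) this
      omega
    · have : 0 < e * p ^ (l % a) := Nat.mul_pos he hpp
      omega

lemma ax_sum_shift (p a : ℕ) : ∀ i, ∑ l ∈ range a, p ^ ((l + i) % a) = ∑ l ∈ range a, p ^ l := by
  intro i
  induction i with
  | zero => exact sum_congr rfl fun l hl => by rw [add_zero, Nat.mod_eq_of_lt (mem_range.1 hl)]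
  | succ i ih =>
    rw [← ih]
    have h1 := sum_range_succ (fun l => p ^ ((l + i) % a)) a
    have h2 := sum_range_succ' (fun l => p ^ ((l + i) % a)) a
    simp only [Nat.add_mod_left, zero_add] at h1 h2
    have h3 : ∑ l ∈ range a, p ^ ((l + (i + 1)) % a) = ∑ l ∈ range a, p ^ ((l + 1 + i) % a) :=
      sum_congr rfl fun l _ => by rw [show l + (i + 1) = l + 1 + i by ring]
    omega

lemma axRot_sum (p a : ℕ) (L : List ℕ) : ∀ i,
    ∑ l ∈ range a, axRot p a (l + i) L = L.sum * ∑ l ∈ range a, p ^ l := by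
  induction L with
  | nil => intro i; simp [axRot]
  | cons e t ih =>
    intro i
    simp only [axRot, sum_add_distrib, ← mul_sum, List.sum_cons, add_mul, ax_sum_shift]
    rw [← ih (i + 1)]
    rfl

lemma ax_digits_sum (p : ℕ) (hp : 2 ≤ p) (a : ℕ) :
    (p.digits (p ^ a * (p ^ a - 1))).sum = a * (p - 1) := by
  have h : ∀ b : ℕ, (p.digits (p ^ b - 1)).sum = b * (p - 1) := by
    intro b
    induction b with
    | zero => simp
    | succ b ih =>
      have hb : 1 ≤ p ^ b := Nat.one_le_pow _ _ (by omega)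
      have e : p ^ (b + 1) - 1 = (p - 1) + p * (p ^ b - 1) := by
        obtain ⟨c, hc⟩ := Nat.exists_eq_add_of_le hb
        rw [pow_succ, hc]
        have : (1 + c) * p = p + p * c := by ring
        simp; omega
      rw [e, Nat.digits_add p (by omega) _ _ (by omega) (by left; omega)]
      simp [ih]; ring
  rcases Nat.eq_zero_or_pos a with rfl | ha
  · simp
  · rw [Nat.digits_base_pow_mul (by omega)]
    · simp [h]
    · have := Nat.one_lt_pow ha.ne' (show 1 < p by omega)
      omega

lemma ax_multinomial {ι σ : Type*} [Fintype σ] (p a : ℕ) [hp : Fact p.Prime]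
    (s : Finset ι) (k : ι → ℕ) (w : ι → σ → ℕ) (d : ℕ) (hd : d < Fintype.card σ)
    (hk : ∑ j ∈ s, k j = p ^ a * (p ^ a - 1))
    (hw : ∀ j ∈ s, ∑ i, w j i ≤ d)
    (hpos : ∀ i, 0 < ∑ j ∈ s, w j i * k j)
    (hdvd : ∀ i, (p ^ a - 1) ∣ ∑ j ∈ s, w j i * k j) :
    p ^ a ∣ Nat.multinomial s k := by
  have hp2 := hp.out.two_le
  set D := fun n => (p.digits n).sum with hD
  have leg : ∀ n, (p - 1) * padicValNat p n.factorial + D n = n := by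
    intro n
    rw [sub_one_mul_padicValNat_factorial]
    exact Nat.sub_add_cancel (Nat.digit_sum_le p n)
  set m := Nat.multinomial s k
  have spec : (∏ j ∈ s, (k j).factorial) * m = (∑ j ∈ s, k j).factorial := Nat.multinomial_spec s k
  have hm : m ≠ 0 := by
    intro h; rw [h, mul_zero] at spec; exact (Nat.factorial_ne_zero _ spec.symm)
  have hval : ∑ j ∈ s, padicValNat p (k j).factorial + padicValNat p m
      = padicValNat p (∑ j ∈ s, k j).factorial := by
    rw [← spec, padicValNat.mul (prod_ne_zero_iff.2 fun j _ => Nat.factorial_ne_zero _) hm]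
    congr 1
    symm
    simpa only [Nat.factorization_def _ hp.out, Finsupp.finsetSum_apply] using
      congrArg (fun g => g p) (Nat.factorization_prod (S := s) (g := fun j => (k j).factorial)
        (fun j _ => Nat.factorial_ne_zero _))
  have key : (p - 1) * padicValNat p m + a * (p - 1) = ∑ j ∈ s, D (k j) := by
    have h1 := leg (∑ j ∈ s, k j)
    have h2 : ∑ j ∈ s, ((p - 1) * padicValNat p (k j).factorial + D (k j)) = ∑ j ∈ s, k j :=
      sum_congr rfl fun j _ => leg (k j)
    rw [sum_add_distrib, ← mul_sum] at h2
    have h3 : D (∑ j ∈ s, k j) = a * (p - 1) := by rw [hk]; exact ax_digits_sum p hp2 a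
    rw [h3, ← hval, mul_add] at h1
    omega
  -- lower bound
  rcases Nat.eq_zero_or_pos a with ha | ha
  · subst ha; simp
  have hq : 2 ≤ p ^ a := by
    have := Nat.one_lt_pow ha.ne' (show 1 < p by omega)
    omega
  set Q := p ^ a - 1 with hQ
  have hQpos : 0 < Q := by omega
  let R := fun l j => axRot p a l (p.digits (k j))
  have Rmod : ∀ l j, R l j ≡ p ^ l * k j [MOD Q] := fun l j => by
    have := axRot_modEq p a (by omega) (p.digits (k j)) l
    rwa [Nat.ofDigits_digits] at this
  have bound : ∀ l, 2 * Q ≤ ∑ j ∈ s, R l j := by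
    intro l
    have c1 : ∀ i, Q ≤ ∑ j ∈ s, w j i * R l j := by
      intro i
      apply Nat.le_of_dvd
      · obtain ⟨j, hj, hj0⟩ := (sum_pos_iff).1 (hpos i)
        refine sum_pos_iff.2 ⟨j, hj, ?_⟩
        have hkj : 0 < k j := Nat.pos_of_ne_zero fun h => by simp [h] at hj0
        have hwj : 0 < w j i := Nat.pos_of_ne_zero fun h => by simp [h] at hj0
        exact Nat.mul_pos hwj (axRot_pos p a (by omega) _ l (by rwa [Nat.ofDigits_digits]))
      · have : ∑ j ∈ s, w j i * R l j ≡ p ^ l * ∑ j ∈ s, w j i * k j [MOD Q] := by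
          rw [mul_sum]
          refine Nat.ModEq.sum fun j _ => ?_
          have := (Rmod l j).mul_left (w j i)
          rwa [show p ^ l * (w j i * k j) = w j i * (p ^ l * k j) by ring]
        exact (this.dvd_iff dvd_rfl).2 ((hdvd i).mul_left _)
    have c2 : Q ∣ ∑ j ∈ s, R l j := by
      have : ∑ j ∈ s, R l j ≡ p ^ l * ∑ j ∈ s, k j [MOD Q] := by
        rw [mul_sum]
        exact Nat.ModEq.sum fun j _ => Rmod l j
      exact (this.dvd_iff dvd_rfl).2 (by rw [hk]; exact (dvd_mul_left _ _).mul_left _)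
    have c3 : Fintype.card σ * Q ≤ d * ∑ j ∈ s, R l j := by
      calc Fintype.card σ * Q = ∑ i : σ, Q := by simp
        _ ≤ ∑ i : σ, ∑ j ∈ s, w j i * R l j := sum_le_sum fun i _ => c1 i
        _ = ∑ j ∈ s, (∑ i, w j i) * R l j := by rw [sum_comm]; simp only [sum_mul]
        _ ≤ ∑ j ∈ s, d * R l j := sum_le_sum fun j hj => Nat.mul_le_mul_right _ (hw j hj)
        _ = _ := by rw [mul_sum]
    obtain ⟨c, hc⟩ := c2
    rw [hc] at c3 ⊢
    have : 2 ≤ c := by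
      by_contra hlt
      have hc1 : c ≤ 1 := by omega
      have : d * (Q * c) ≤ d * Q := Nat.mul_le_mul_left _ (by nlinarith)
      have : d * Q < Fintype.card σ * Q := Nat.mul_lt_mul_of_pos_right hd hQpos
      omega
    nlinarith
  have tot : a * (2 * Q) ≤ (∑ j ∈ s, D (k j)) * ∑ l ∈ range a, p ^ l := by
    calc a * (2 * Q) = ∑ l ∈ range a, 2 * Q := by simp
      _ ≤ ∑ l ∈ range a, ∑ j ∈ s, R l j := sum_le_sum fun l _ => bound l
      _ = ∑ j ∈ s, D (k j) * ∑ l ∈ range a, p ^ l := by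
        rw [sum_comm]
        exact sum_congr rfl fun j _ => axRot_sum p a _ 0
      _ = _ := by rw [sum_mul]
  have geo : (p - 1) * ∑ l ∈ range a, p ^ l = Q := by
    have := Nat.geomSum_eq hp2 a
    rw [this, Nat.mul_div_cancel' ]
    simpa using Nat.sub_dvd_pow_sub_pow p 1 a
  set G := ∑ l ∈ range a, p ^ l
  have hG : 0 < G := Nat.pos_of_ne_zero fun h => by rw [h] at geo; omega
  have fin : a * (2 * (p - 1)) ≤ ∑ j ∈ s, D (k j) := by
    refine Nat.le_of_mul_le_mul_right ?_ hG
    calc _ = a * (2 * ((p - 1) * G)) := by ring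
      _ ≤ _ := by rw [geo]; exact tot
  have : a ≤ padicValNat p m := by
    have hp1 : 0 < p - 1 := by omega
    refine Nat.le_of_mul_le_mul_left ?_ hp1
    nlinarith
  exact (padicValNat_dvd_iff_le hm).2 this

open WittVector in
lemma ax_pow_sum {K : Type*} [Field K] [Fintype K] (p : ℕ) [Fact p.Prime] [CharP K p]
    (m : ℕ) (hm : ¬ (Fintype.card K - 1) ∣ m) :
    ∑ x : K, (teichmuller p x) ^ m = 0 := by
  classical
  obtain ⟨g, hg⟩ := IsCyclic.exists_generator (α := Kˣ)
  have hgm : g ^ m ≠ 1 := by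
    intro h
    apply hm
    have := orderOf_dvd_of_pow_eq_one h
    rwa [orderOf_eq_card_of_forall_mem_zpowers hg, Nat.card_eq_fintype_card,
      Fintype.card_units] at this
  have h1 : (teichmuller p (g : K)) ^ m * ∑ x : K, (teichmuller p x) ^ m
      = ∑ x : K, (teichmuller p x) ^ m := by
    rw [mul_sum]
    refine Fintype.sum_equiv (Equiv.mulLeft₀ (g : K) g.ne_zero) _ _ fun x => ?_
    simp [mul_pow]
  have h2 : ((teichmuller p (g : K)) ^ m - 1) * ∑ x : K, (teichmuller p x) ^ m = 0 := by
    rw [sub_mul, h1, one_mul, sub_self]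
  rcases mul_eq_zero.1 h2 with h | h
  · exfalso
    have h3 : (teichmuller p (g : K)) ^ m = 1 := sub_eq_zero.1 h
    have h4 := congrArg constantCoeff h3
    rw [map_pow, map_one] at h4
    change ((teichmuller p (g : K)).coeff 0) ^ m = 1 at h4
    rw [teichmuller_coeff_zero] at h4
    exact hgm (Units.ext (by simpa using h4))
  · exact h

open WittVector in
lemma ax_dvd_of_witt {K : Type*} [Field K] [Fintype K] (p : ℕ) [hp : Fact p.Prime] [CharP K p]
    (a N : ℕ) (h : ((p : WittVector p K)) ^ a ∣ (N : WittVector p K)) : p ^ a ∣ N := by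
  rcases Nat.eq_zero_or_pos N with rfl | hN
  · simp
  obtain ⟨b, u, hu, rfl⟩ := Nat.exists_eq_pow_mul_and_not_dvd hN.ne' p hp.out.ne_one
  by_cases hab : a ≤ b
  · exact (pow_dvd_pow p hab).mul_right u
  exfalso
  obtain ⟨c, hc⟩ := h
  obtain ⟨e, rfl⟩ := Nat.exists_eq_add_of_lt (not_le.1 hab)
  push_cast at hc
  have hp0 : ((p : WittVector p K)) ^ b ≠ 0 := pow_ne_zero _ (p_nonzero p K)
  rw [show b + e + 1 = b + (e + 1) by ring, pow_add, mul_assoc] at hc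
  have h2 := congrArg constantCoeff (mul_left_cancel₀ hp0 hc)
  rw [map_mul, map_pow, map_natCast, map_natCast, CharP.cast_eq_zero K p, zero_pow (by omega),
    zero_mul, CharP.cast_eq_zero_iff K p] at h2
  exact hu h2

open WittVector in
lemma ax_pow_indicator {K : Type*} [Field K] [Fintype K] [DecidableEq K] (p a : ℕ)
    [hp : Fact p.Prime] [CharP K p] (ha : 0 < a) (hK : Fintype.card K = p ^ a)
    (y : WittVector p K) :
    ((p : WittVector p K)) ^ a ∣
      (if constantCoeff y ≠ 0 then 1 else 0) - y ^ (p ^ a * (p ^ a - 1)) := by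
  have hq : 2 ≤ p ^ a := by
    have := Nat.one_lt_pow ha.ne' hp.out.one_lt
    omega
  have hker : ∀ z : WittVector p K, constantCoeff z = 0 → (p : WittVector p K) ∣ z := by
    intro z hz
    rw [← Ideal.mem_span_singleton, ← ker_constantCoeff]
    exact hz
  split_ifs with h
  · have h1 : (p : WittVector p K) ∣ 1 - y ^ (p ^ a - 1) := by
      apply hker
      rw [map_sub, map_one, map_pow, ← hK, FiniteField.pow_card_sub_one_eq_one _ h, sub_self]
    have h2 := dvd_sub_pow_of_dvd_sub h1 a
    rw [one_pow, ← pow_mul, mul_comm (p ^ a - 1)] at h2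
    exact (pow_dvd_pow _ (Nat.le_succ a)).trans h2
  · rw [zero_sub, dvd_neg]
    have h1 := hker y (not_not.1 h)
    refine (pow_dvd_pow_of_dvd h1 a).trans (pow_dvd_pow y ?_)
    have : a < p ^ a := Nat.lt_pow_self hp.out.one_lt
    nlinarith [Nat.sub_add_cancel (show 1 ≤ p ^ a by omega)]

open WittVector in
/-- Ax's theorem modulo `q` for one hypersurface. -/
lemma ax_single {K σ : Type*} [Field K] [Fintype K] [DecidableEq K] [Fintype σ] [DecidableEq σ]
    (f : MvPolynomial σ K) (hf : f.totalDegree < Fintype.card σ) :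
    Fintype.card K ∣ #{x : σ → K | MvPolynomial.eval x f ≠ 0} := by
  obtain ⟨p, hchar⟩ := CharP.exists K
  obtain ⟨⟨a, ha⟩, hp, hK⟩ := FiniteField.card K p
  have : Fact p.Prime := ⟨hp⟩
  simp only [PNat.mk_coe] at hK
  rw [hK]
  apply ax_dvd_of_witt (K := K) p a
  let T : K → WittVector p K := fun x => teichmuller p x
  let F : (σ → K) → WittVector p K := fun x =>
    ∑ w ∈ f.support, T (f.coeff w) * ∏ i, T (x i) ^ (w i)
  have hT : ∀ x, constantCoeff (T x) = x := fun x => teichmuller_coeff_zero p x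
  have hF : ∀ x, constantCoeff (F x) = MvPolynomial.eval x f := by
    intro x
    simp only [F, map_sum, map_mul, map_prod, map_pow, hT, MvPolynomial.eval_eq']
  set M := p ^ a * (p ^ a - 1) with hM
  have h1 : (p : WittVector p K) ^ a ∣
      ((#{x : σ → K | MvPolynomial.eval x f ≠ 0} : ℕ) : WittVector p K) - ∑ x, F x ^ M := by
    rw [card_filter, Nat.cast_sum, ← sum_sub_distrib]
    refine dvd_sum fun x _ => ?_
    have := ax_pow_indicator p a ha hK (F x)
    rw [hF] at this
    simpa using this
  have h2 : (p : WittVector p K) ^ a ∣ ∑ x, F x ^ M := by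
    simp only [F, sum_pow_eq_sum_piAntidiag]
    rw [sum_comm]
    refine dvd_sum fun k hk => ?_
    have hk' := (mem_piAntidiag.1 hk).1
    have e : ∑ x : σ → K, (Nat.multinomial f.support k : WittVector p K) *
        ∏ w ∈ f.support, (T (f.coeff w) * ∏ i : σ, T (x i) ^ (w i)) ^ k w
        = (Nat.multinomial f.support k : WittVector p K) * ((∏ w ∈ f.support, T (f.coeff w) ^ k w) *
          ∏ i : σ, ∑ y : K, T y ^ (∑ w ∈ f.support, w i * k w)) := by
      rw [← mul_sum]
      congr 1
      rw [prod_univ_sum, Fintype.piFinset_univ, mul_sum]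
      refine sum_congr rfl fun x _ => ?_
      simp only [mul_pow, prod_mul_distrib, ← prod_pow, ← pow_mul, ← prod_pow_eq_pow_sum]
      rw [prod_comm]
    rw [e]
    by_cases hall : ∀ i, 0 < ∑ w ∈ f.support, w i * k w ∧
        (p ^ a - 1) ∣ ∑ w ∈ f.support, w i * k w
    · apply Dvd.dvd.mul_right
      have := ax_multinomial p a f.support k (fun w i => w i) f.totalDegree hf hk'
        (fun w hw => by
          have := MvPolynomial.le_totalDegree hw
          rwa [Finsupp.sum_fintype _ _ (fun _ => rfl)] at this)
        (fun i => (hall i).1) (fun i => (hall i).2)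
      exact_mod_cast Nat.cast_dvd_cast (α := WittVector p K) this
    · push Not at hall
      obtain ⟨i, hi⟩ := hall
      apply Dvd.dvd.mul_left
      apply Dvd.dvd.mul_left
      refine dvd_trans ?_ (dvd_prod_of_mem _ (mem_univ i))
      rcases Nat.eq_zero_or_pos (∑ w ∈ f.support, w i * k w) with h0 | h0
      · rw [h0]
        simp [hK]
      · have := ax_pow_sum (K := K) p _ (by rw [hK]; exact hi h0)
        simp only [T]
        rw [this]
        exact dvd_zero _
  simpa using dvd_add h1 h2

lemma ax_affine {K σ : Type*} [Field K] [Fintype K] [DecidableEq K] [Fintype σ] [DecidableEq σ]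
    {r : ℕ} (f : Fin r → MvPolynomial σ K) (hf : ∑ i, (f i).totalDegree < Fintype.card σ) :
    Fintype.card K ∣ #{x : σ → K | ∀ i, MvPolynomial.eval x (f i) = 0} := by
  rw [← Int.natCast_dvd_natCast]
  have e : ((#{x : σ → K | ∀ i, MvPolynomial.eval x (f i) = 0} : ℕ) : ℤ) =
      ∑ t : Finset (Fin r), (-1) ^ #t *
        ((#{x : σ → K | MvPolynomial.eval x (∏ i ∈ t, f i) ≠ 0} : ℕ) : ℤ) := by
    simp only [card_filter, Nat.cast_sum, mul_sum]
    rw [sum_comm]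
    refine sum_congr rfl fun x _ => ?_
    have h1 : (((if ∀ i, MvPolynomial.eval x (f i) = 0 then 1 else 0 : ℕ)) : ℤ) =
        ∏ i, ((-1) * (if MvPolynomial.eval x (f i) ≠ 0 then 1 else 0 : ℤ) + 1) := by
      split_ifs with h
      · simp [h]
      · push Not at h
        obtain ⟨i, hi⟩ := h
        rw [prod_eq_zero (mem_univ i)]
        · simp
        · simp [hi]
    rw [h1, prod_add_one, powerset_univ]
    refine sum_congr rfl fun t _ => ?_
    rw [prod_mul_distrib, prod_const, map_prod]
    congr 1
    simp only [prod_ne_zero_iff]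
    split_ifs with h
    · simpa using prod_eq_one fun i hi => by simp [h i hi]
    · push Not at h
      obtain ⟨i, hi, h0⟩ := h
      rw [prod_eq_zero hi]
      · simp
      · simp [h0]
  rw [e]
  refine dvd_sum fun t _ => Dvd.dvd.mul_left ?_ _
  rw [Int.natCast_dvd_natCast]
  apply ax_single
  calc _ ≤ ∑ i ∈ t, (f i).totalDegree := MvPolynomial.totalDegree_finsetProd _ _
    _ ≤ ∑ i, (f i).totalDegree := sum_le_sum_of_subset (subset_univ _)
    _ < _ := hf

theorem stmt_0 (K : Type*) [Field K] [Fintype K] (n r : ℕ) (hn : 0 < n) (hr : 0 < r)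
    (f : Fin r → MvPolynomial (Fin (n + 1)) K) (d : Fin r → ℕ)
    (hd : ∀ i, 1 ≤ d i) (hhom : ∀ i, (f i).IsHomogeneous (d i))
    (hsum : ∑ i, d i ≤ n) :
    Nat.card {P : Projectivization K (Fin (n + 1) → K) |
      ∀ i, MvPolynomial.eval P.rep (f i) = 0} ≡ 1 [MOD Fintype.card K] := by
  classical
  have haff := ax_affine f (by
    calc ∑ i, (f i).totalDegree ≤ ∑ i, d i := sum_le_sum fun i _ => (hhom i).totalDegree_le
      _ < _ := by simp; omega)
  have hsm : ∀ (c : K) (v : Fin (n + 1) → K) i,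
      MvPolynomial.eval (c • v) (f i) = c ^ d i * MvPolynomial.eval v (f i) := by
    intro c v i
    rw [MvPolynomial.eval_eq', MvPolynomial.eval_eq', mul_sum]
    refine sum_congr rfl fun w hw => ?_
    have hdeg : ∑ j, w j = d i := by
      have := hhom i (MvPolynomial.mem_support_iff.1 hw)
      rw [← this, Finsupp.weight_apply, Finsupp.sum_fintype _ _ (by simp)]
      simp
    simp only [Pi.smul_apply, smul_eq_mul, mul_pow, prod_mul_distrib, prod_pow_eq_pow_sum, hdeg]
    ring
  set S := {P : Projectivization K (Fin (n + 1) → K) | ∀ i, MvPolynomial.eval P.rep (f i) = 0}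
  set Z := (univ.filter fun x : Fin (n + 1) → K => ∀ i, MvPolynomial.eval x (f i) = 0) with hZ
  have h0 : (0 : Fin (n + 1) → K) ∈ Z := by
    rw [hZ, mem_filter]
    refine ⟨mem_univ _, fun i => ?_⟩
    have := hsm 0 0 i
    rwa [zero_smul, zero_pow (by have := hd i; omega), zero_mul] at this
  let φ : S × Kˣ → {x // x ∈ Z.erase 0} := fun y => ⟨y.2 • y.1.1.rep, by
    rw [mem_erase, hZ, mem_filter]
    refine ⟨?_, mem_univ _, fun i => ?_⟩
    · exact (smul_ne_zero_iff_ne y.2).2 y.1.1.rep_nonzero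
    · rw [Units.smul_def, hsm, y.1.2 i, mul_zero]⟩
  have hφ : Function.Bijective φ := by
    constructor
    · rintro ⟨⟨P, hP⟩, u⟩ ⟨⟨P', hP'⟩, u'⟩ h
      have h1 : u • P.rep = u' • P'.rep := congrArg Subtype.val h
      have hPP : P = P' := by
        rw [← P.mk_rep, ← P'.mk_rep, Projectivization.mk_eq_mk_iff]
        exact ⟨u⁻¹ * u', by rw [mul_smul, ← h1, inv_smul_smul]⟩
      subst hPP
      have : u = u' := by
        have h2 : ((u : K) - u') • P.rep = 0 := by
          rw [sub_smul, sub_eq_zero]; exact h1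
        rcases smul_eq_zero.1 h2 with h3 | h3
        · exact Units.ext (sub_eq_zero.1 h3)
        · exact absurd h3 P.rep_nonzero
      rw [this]
    · rintro ⟨v, hv⟩
      have hv' := hv
      rw [mem_erase, hZ, mem_filter] at hv'
      obtain ⟨hv0, -, hvz⟩ := hv'
      obtain ⟨u, hu⟩ := Projectivization.exists_smul_eq_mk_rep K v hv0
      refine ⟨⟨⟨Projectivization.mk K v hv0, fun i => ?_⟩, u⁻¹⟩, ?_⟩
      · rw [← hu, Units.smul_def, hsm, hvz i, mul_zero]
      · apply Subtype.ext
        change u⁻¹ • (Projectivization.mk K v hv0).rep = v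
        rw [← hu, inv_smul_smul]
  have hcard := Nat.card_congr (Equiv.ofBijective φ hφ)
  rw [Nat.card_prod, Nat.card_eq_fintype_card (α := Kˣ), Fintype.card_units,
    Nat.card_eq_fintype_card (α := {x // x ∈ Z.erase 0}), Fintype.card_coe,
    card_erase_of_mem h0] at hcard
  have hZ1 : 1 ≤ #Z := card_pos.2 ⟨0, h0⟩
  have hK1 : 1 ≤ Fintype.card K := Fintype.card_pos
  change Nat.card S ≡ 1 [MOD Fintype.card K]
  obtain ⟨c, hc⟩ := haff
  rw [← Int.natCast_modEq_iff, Int.modEq_iff_dvd]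
  zify [hZ1, hK1] at hcard hc
  refine ⟨(c : ℤ) - Nat.card S, ?_⟩
  push_cast
  linear_combination hc + hcard
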